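/- arXiv:2106.07108 — 8 statements merged into one kernel-verified Lean document; each statement's English description precedes it below -/
import Mathlib

section
/- Suppose C ∈ ℝ^{(m+1)×(m+1)} is symmetric positive definite, β > 0, v ∈ ℝ, and w ∈ ℝ^{1×m}. If there exists u ∈ ℝ^m such that β √((1,uᵀ) C (1,uᵀ)ᵀ) ≤ v + w u, then ψ C⁻¹ ψᵀ ≥ β², where ψ := [v w] ∈ ℝ^{1×(m+1)}. (Necessary condition for pointwise feasibility, Lemma 2 of the paper.) -/
open Matrix

/-- The vector `(1, uᵀ)ᵀ ∈ ℝ^{m+1}`, indexed by `Fin 1 ⊕ Fin m`. -/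
def onePad {m : ℕ} (u : Fin m → ℝ) : Fin 1 ⊕ Fin m → ℝ :=
  Sum.elim (fun _ => (1 : ℝ)) u

/-- The row vector `ψ = [v w] ∈ ℝ^{1×(m+1)}`, indexed by `Fin 1 ⊕ Fin m`. -/
def psiRow {m : ℕ} (v : ℝ) (w : Fin m → ℝ) : Fin 1 ⊕ Fin m → ℝ :=
  Sum.elim (fun _ => v) w

section CauchySchwarz

variable {n : Type*} [Fintype n]

theorem sq_dotProduct_mulVec_le_of_posSemidef {R : Type*} [CommRing R] [LinearOrder R]
    [IsStrictOrderedRing R] [StarRing R] [TrivialStar R] {C : Matrix n n R}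
    (hC : C.PosSemidef) (x y : n → R) :
    (x ⬝ᵥ (C *ᵥ y)) ^ 2 ≤ (x ⬝ᵥ (C *ᵥ x)) * (y ⬝ᵥ (C *ᵥ y)) := by
  classical
  have hnonneg (z : n → R) : 0 ≤ C.toBilin' z z := by
    simpa [toBilin'_apply'] using hC.dotProduct_mulVec_nonneg z
  have hsymm : C.toBilin'.IsSymm := by
    simpa [isSymm_toBilin'_iff_isSymm, conjTranspose_eq_transpose_of_trivial] using hC.isHermitian
  simpa only [toBilin'_apply'] using
    LinearMap.BilinForm.apply_sq_le_of_symm C.toBilin' hnonneg ⟨hsymm.eq⟩ x y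

theorem sq_dotProduct_le_of_posDef [DecidableEq n] {K : Type*} [Field K] [LinearOrder K]
    [IsStrictOrderedRing K] [StarRing K] [TrivialStar K] {C : Matrix n n K}
    (hC : C.PosDef) (x y : n → K) :
    (x ⬝ᵥ y) ^ 2 ≤ (x ⬝ᵥ (C *ᵥ x)) * (y ⬝ᵥ (C⁻¹ *ᵥ y)) := by
  have hmulVec_inv : C *ᵥ (C⁻¹ *ᵥ y) = y := by
    rw [mulVec_mulVec, mul_nonsing_inv _ ((isUnit_iff_isUnit_det C).1 hC.isUnit), one_mulVec]
  simpa only [hmulVec_inv, dotProduct_comm (C⁻¹ *ᵥ y) y] using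
    sq_dotProduct_mulVec_le_of_posSemidef hC.posSemidef x (C⁻¹ *ᵥ y)

theorem sq_le_dotProduct_inv_mulVec_of_mul_sqrt_le [DecidableEq n] {C : Matrix n n ℝ}
    (hC : C.PosDef) {β : ℝ} (hβ : 0 ≤ β) {x y : n → ℝ} (hx : x ≠ 0)
    (hxy : β * √(x ⬝ᵥ (C *ᵥ x)) ≤ x ⬝ᵥ y) :
    β ^ 2 ≤ y ⬝ᵥ (C⁻¹ *ᵥ y) := by
  have hpos : 0 < x ⬝ᵥ (C *ᵥ x) := by simpa using hC.dotProduct_mulVec_pos hx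
  refine le_of_mul_le_mul_left ?_ hpos
  calc
    (x ⬝ᵥ (C *ᵥ x)) * β ^ 2 = (β * √(x ⬝ᵥ (C *ᵥ x))) ^ 2 := by
      rw [mul_pow, Real.sq_sqrt hpos.le, mul_comm]
    _ ≤ (x ⬝ᵥ y) ^ 2 := by gcongr
    _ ≤ (x ⬝ᵥ (C *ᵥ x)) * (y ⬝ᵥ (C⁻¹ *ᵥ y)) := sq_dotProduct_le_of_posDef hC x y

end CauchySchwarz

section Padding

variable {m : ℕ} (u : Fin m → ℝ)

theorem onePad_ne_zero : onePad u ≠ 0 :=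
  fun h => one_ne_zero (congrFun h (Sum.inl 0))

theorem onePad_dotProduct_psiRow (v : ℝ) (w : Fin m → ℝ) :
    onePad u ⬝ᵥ psiRow v w = v + w ⬝ᵥ u := by
  rw [onePad, psiRow, sumElim_dotProduct_sumElim, dotProduct_comm u w]
  simp [dotProduct]

end Padding

/-- Lemma 2 (necessary condition for pointwise feasibility): if the chance
constraint `β √((1,uᵀ) C (1,uᵀ)ᵀ) ≤ v + w u` is feasible for some `u`, then
`ψ C⁻¹ ψᵀ ≥ β²` where `ψ = [v w]`. -/
theorem necessary_condition_feasibility {m : ℕ} (hm : 0 < m)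
    (C : Matrix (Fin 1 ⊕ Fin m) (Fin 1 ⊕ Fin m) ℝ) (hC : C.PosDef)
    (β : ℝ) (hβ : 0 < β) (v : ℝ) (w : Fin m → ℝ)
    (hfeas : ∃ u : Fin m → ℝ,
      β * Real.sqrt (onePad u ⬝ᵥ (C *ᵥ onePad u)) ≤ v + w ⬝ᵥ u) :
    psiRow v w ⬝ᵥ (C⁻¹ *ᵥ psiRow v w) ≥ β ^ 2 := by
  obtain ⟨u, hu⟩ := hfeas
  rw [← onePad_dotProduct_psiRow] at hu
  exact sq_le_dotProduct_inv_mulVec_of_mul_sqrt_le hC hβ.le (onePad_ne_zero u) hu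
end

section
/- Suppose QᵀQ is positive definite and the smallest eigenvalue of the symmetric matrix F = QᵀQ − wᵀw is negative (equivalently, there exists e ∈ ℝ^m with eᵀ F e < 0). Then there exists u ∈ ℝ^m satisfying the second-order cone constraint ‖Q u + r‖₂ ≤ w u + v. (Sufficient condition for pointwise feasibility, Lemma 3 of the paper.) -/
open Matrix

/-- The Euclidean norm of a vector in `ℝ^{m+1}`. -/
noncomputable def eucNorm {n : ℕ} (x : Fin n → ℝ) : ℝ :=
  Real.sqrt (x ⬝ᵥ x)

/-!
The inequality `eᵀ F e < 0` says `‖Q e‖₂ < |w e|`. After replacing `e` by `-e` if necessary,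
`‖Q e‖₂ < w e`, so along the ray `u = t e` the right-hand side `w u + v` of the cone constraint
grows strictly faster in `t` than `‖Q u + r‖₂ ≤ t ‖Q e‖₂ + ‖r‖₂`, and overtakes it.
-/

section NormedSpace

open Filter

variable {F : Type*} [SeminormedAddCommGroup F] [NormedSpace ℝ F]

theorem eventually_norm_smul_add_le {y : F} {a : ℝ} (hya : ‖y‖ < a) (r : F) (v : ℝ) :
    ∀ᶠ t : ℝ in atTop, ‖t • y + r‖ ≤ t * a + v := by
  have hgap : Tendsto (fun t : ℝ => t * (a - ‖y‖)) atTop atTop :=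
    tendsto_id.atTop_mul_const (sub_pos.2 hya)
  filter_upwards [eventually_ge_atTop 0, hgap.eventually_ge_atTop (‖r‖ - v)] with t ht htgap
  calc ‖t • y + r‖ ≤ t * ‖y‖ + ‖r‖ := by
        simpa only [norm_smul_of_nonneg ht] using norm_add_le (t • y) r
    _ ≤ t * a + v := by linarith

theorem exists_norm_map_add_le {E : Type*} [AddCommGroup E] [Module ℝ E]
    (L : E →ₗ[ℝ] F) (ℓ : Module.Dual ℝ E) {e : E} (he : ‖L e‖ < |ℓ e|) (r : F) (v : ℝ) :
    ∃ u : E, ‖L u + r‖ ≤ ℓ u + v := by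
  obtain ⟨d, hd⟩ : ∃ d : E, ‖L d‖ < ℓ d := by
    rcases lt_abs.1 he with hpos | hneg
    · exact ⟨e, hpos⟩
    · exact ⟨-e, by simpa only [map_neg, norm_neg] using hneg⟩
  obtain ⟨t, ht⟩ := (eventually_norm_smul_add_le hd r v).exists
  exact ⟨t • d, by simpa only [map_smul, smul_eq_mul] using ht⟩

end NormedSpace

theorem dotProduct_gram_sub_vecMulVec_mulVec {ι κ R : Type*} [Fintype ι] [Fintype κ] [CommRing R]
    (Q : Matrix κ ι R) (w e : ι → R) :
    e ⬝ᵥ ((Qᵀ * Q - vecMulVec w w) *ᵥ e) = (Q *ᵥ e) ⬝ᵥ (Q *ᵥ e) - (w ⬝ᵥ e) ^ 2 := by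
  have hgram : e ⬝ᵥ ((Qᵀ * Q) *ᵥ e) = (Q *ᵥ e) ⬝ᵥ (Q *ᵥ e) := by
    rw [← mulVec_mulVec, dotProduct_transpose_mulVec]
  have hrankOne : e ⬝ᵥ (vecMulVec w w *ᵥ e) = (w ⬝ᵥ e) ^ 2 := by
    rw [vecMulVec_mulVec, op_smul_eq_smul, dotProduct_smul, smul_eq_mul, dotProduct_comm e w, sq]
  rw [sub_mulVec, dotProduct_sub, hgram, hrankOne]

theorem eucNorm_eq_norm_toLp {n : ℕ} (x : Fin n → ℝ) : eucNorm x = ‖WithLp.toLp 2 x‖ := by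
  simp only [eucNorm, EuclideanSpace.norm_eq, dotProduct, Real.norm_eq_abs, sq_abs, ← sq]

theorem eucNorm_lt_abs_iff {n : ℕ} {x : Fin n → ℝ} {a : ℝ} : eucNorm x < |a| ↔ x ⬝ᵥ x < a ^ 2 := by
  rw [eucNorm, ← Real.sqrt_sq_eq_abs, Real.sqrt_lt_sqrt_iff]
  simpa only [star_trivial] using dotProduct_self_star_nonneg x

theorem sufficient_condition_feasibility_general {ι : Type*} [Fintype ι] {k : ℕ}
    (Q : Matrix (Fin k) ι ℝ) (r : Fin k → ℝ) (w : ι → ℝ) (v : ℝ)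
    (hneg : ∃ e : ι → ℝ, e ⬝ᵥ ((Qᵀ * Q - vecMulVec w w) *ᵥ e) < 0) :
    ∃ u : ι → ℝ, eucNorm (Q *ᵥ u + r) ≤ w ⬝ᵥ u + v := by
  obtain ⟨e, he⟩ := hneg
  rw [dotProduct_gram_sub_vecMulVec_mulVec, sub_neg, ← eucNorm_lt_abs_iff] at he
  simp only [eucNorm_eq_norm_toLp] at he ⊢
  let L : (ι → ℝ) →ₗ[ℝ] EuclideanSpace ℝ (Fin k) :=
    (WithLp.linearEquiv 2 ℝ (Fin k → ℝ)).symm.toLinearMap ∘ₗ Q.mulVecLin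
  exact exists_norm_map_add_le L (dotProductBilin ℝ ℝ w) (e := e) he (WithLp.toLp 2 r) v

/-- Lemma 3 (sufficient condition for pointwise feasibility): if `QᵀQ` is
positive definite and the smallest eigenvalue of `F = QᵀQ − wᵀw` is negative
(equivalently, `eᵀ F e < 0` for some `e`), then the SOC constraint
`‖Q u + r‖₂ ≤ w u + v` is feasible. -/
theorem sufficient_condition_feasibility {m : ℕ} (hm : 0 < m)
    (Q : Matrix (Fin (m + 1)) (Fin m) ℝ) (r : Fin (m + 1) → ℝ)
    (w : Fin m → ℝ) (v : ℝ)
    (hQ : (Qᵀ * Q).PosDef)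
    (hneg : ∃ e : Fin m → ℝ,
      e ⬝ᵥ ((Qᵀ * Q - Matrix.vecMulVec w w) *ᵥ e) < 0) :
    ∃ u : Fin m → ℝ, eucNorm (Q *ᵥ u + r) ≤ w ⬝ᵥ u + v :=
  sufficient_condition_feasibility_general Q r w v hneg
end

section
/- Suppose QᵀQ is positive definite and e ∈ ℝ^m is a unit vector with eᵀ F e < 0, where F = QᵀQ − wᵀw. Then w e ≠ 0, and there exists α₀ > 0 such that for every α ≥ α₀ the control input u = α · sgn(w e) · e satisfies the second-order cone constraint ‖Q u + r‖₂ ≤ w u + v. (Constructive content of the proof of Lemma 3 of the paper.) -/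
open Matrix

/-!
The condition `eᵀ F e < 0` says exactly that `‖Q e‖ < |w e|`. Along `u = α · sgn(w e) · e` the
triangle inequality bounds `‖Q u + r‖` by `α ‖Q e‖ + ‖r‖`, while `w u + v = α |w e| + v`, so the
larger slope on the right wins as soon as
`α ≥ max 1 ((‖r‖ - v) / (|w e| - ‖Q e‖))`.
-/

theorem real_sign_mul_self_eq_abs (c : ℝ) : Real.sign c * c = |c| := by
  rcases lt_trichotomy c 0 with hc | rfl | hc
  · rw [Real.sign_of_neg hc, abs_of_neg hc, neg_one_mul]
  · rw [mul_zero, abs_zero]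
  · rw [Real.sign_of_pos hc, abs_of_pos hc, one_mul]

section SignedRay

variable {E : Type*} [SeminormedAddCommGroup E] [NormedSpace ℝ E]

theorem norm_smul_add_le_of_div_le {x y : E} {c v t : ℝ} (hx : ‖x‖ < c) (ht : 0 ≤ t)
    (hdiv : (‖y‖ - v) / (c - ‖x‖) ≤ t) : ‖t • x + y‖ ≤ t * c + v := by
  have hgap : ‖y‖ - v ≤ t * (c - ‖x‖) := (div_le_iff₀ (sub_pos.mpr hx)).mp hdiv
  calc
    ‖t • x + y‖ ≤ t * ‖x‖ + ‖y‖ := by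
      simpa only [norm_smul, Real.norm_of_nonneg ht] using norm_add_le (t • x) y
    _ ≤ t * c + v := by linarith

theorem norm_real_sign_smul {c : ℝ} (hc : c ≠ 0) (x : E) : ‖Real.sign c • x‖ = ‖x‖ := by
  rcases Real.sign_apply_eq_of_ne_zero c hc with h | h
  · rw [h, neg_one_smul, norm_neg]
  · rw [h, one_smul]

theorem norm_mul_sign_smul_add_le_of_div_le {x y : E} {c v t : ℝ} (hx : ‖x‖ < |c|) (ht : 0 ≤ t)
    (hdiv : (‖y‖ - v) / (|c| - ‖x‖) ≤ t) :
    ‖(t * Real.sign c) • x + y‖ ≤ t * Real.sign c * c + v := by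
  have hc : c ≠ 0 := abs_pos.mp ((norm_nonneg x).trans_lt hx)
  rw [← norm_real_sign_smul hc x] at hx hdiv
  rw [mul_smul, mul_assoc, real_sign_mul_self_eq_abs]
  exact norm_smul_add_le_of_div_le hx ht hdiv

end SignedRay

theorem dotProduct_gram_sub_vecMulVec_mulVec_neg_iff {ι : Type*} [Fintype ι] {n : ℕ}
    (Q : Matrix (Fin n) ι ℝ) (w e : ι → ℝ) :
    e ⬝ᵥ ((Qᵀ * Q - vecMulVec w w) *ᵥ e) < 0 ↔ eucNorm (Q *ᵥ e) < |w ⬝ᵥ e| := by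
  have hnonneg : 0 ≤ (Q *ᵥ e) ⬝ᵥ (Q *ᵥ e) := dotProduct_self_star_nonneg _
  rw [dotProduct_gram_sub_vecMulVec_mulVec, sub_neg, eucNorm, ← Real.sqrt_sq_eq_abs,
    Real.sqrt_lt_sqrt_iff hnonneg]

theorem sufficient_condition_constructive_general {ι : Type*} [Fintype ι] {n : ℕ}
    (Q : Matrix (Fin n) ι ℝ) (r : Fin n → ℝ) (w : ι → ℝ) (v : ℝ) (e : ι → ℝ)
    (hneg : e ⬝ᵥ ((Qᵀ * Q - vecMulVec w w) *ᵥ e) < 0) :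
    w ⬝ᵥ e ≠ 0 ∧
    ∃ α₀ : ℝ, 0 < α₀ ∧ ∀ α : ℝ, α₀ ≤ α →
      eucNorm (Q *ᵥ ((α * Real.sign (w ⬝ᵥ e)) • e) + r) ≤
        w ⬝ᵥ ((α * Real.sign (w ⬝ᵥ e)) • e) + v := by
  have hslope : eucNorm (Q *ᵥ e) < |w ⬝ᵥ e| :=
    (dotProduct_gram_sub_vecMulVec_mulVec_neg_iff Q w e).mp hneg
  refine ⟨abs_pos.mp ((Real.sqrt_nonneg _).trans_lt hslope),
    max 1 ((eucNorm r - v) / (|w ⬝ᵥ e| - eucNorm (Q *ᵥ e))),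
    lt_max_of_lt_left one_pos, fun α hα => ?_⟩
  obtain ⟨hone, hdiv⟩ := max_le_iff.mp hα
  rw [mulVec_smul, dotProduct_smul, smul_eq_mul]
  simp only [eucNorm_eq_norm_toLp, WithLp.toLp_add, WithLp.toLp_smul] at hslope hdiv ⊢
  exact norm_mul_sign_smul_add_le_of_div_le hslope (zero_le_one.trans hone) hdiv

/-- Constructive content of the proof of Lemma 3: if `QᵀQ` is positive
definite and `e` is a unit vector with `eᵀ F e < 0`, where `F = QᵀQ − wᵀw`,
then `w e ≠ 0` and for every sufficiently large `α > 0` the control input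
`u = α · sgn(w e) · e` satisfies the SOC constraint `‖Q u + r‖₂ ≤ w u + v`. -/
theorem sufficient_condition_constructive {m : ℕ} (hm : 0 < m)
    (Q : Matrix (Fin (m + 1)) (Fin m) ℝ) (r : Fin (m + 1) → ℝ)
    (w : Fin m → ℝ) (v : ℝ)
    (hQ : (Qᵀ * Q).PosDef)
    (e : Fin m → ℝ) (he : e ⬝ᵥ e = 1)
    (hneg : e ⬝ᵥ ((Qᵀ * Q - Matrix.vecMulVec w w) *ᵥ e) < 0) :
    w ⬝ᵥ e ≠ 0 ∧
    ∃ α₀ : ℝ, 0 < α₀ ∧ ∀ α : ℝ, α₀ ≤ α →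
      eucNorm (Q *ᵥ ((α * Real.sign (w ⬝ᵥ e)) • e) + r) ≤
        w ⬝ᵥ ((α * Real.sign (w ⬝ᵥ e)) • e) + v :=
  sufficient_condition_constructive_general Q r w v e hneg
end

section
/- Suppose the square matrix [r Q] ∈ ℝ^{(m+1)×(m+1)} (the column r followed by the columns of Q) is invertible. Let λ† denote the smallest eigenvalue of F = QᵀQ − wᵀw. Then there exists u ∈ ℝ^m satisfying ‖Q u + r‖₂ ≤ w u + v if and only if H is not positive definite and one of the following three cases holds: (1) λ† < 0; (2) λ† > 0 and v − w F⁻¹ (Qᵀr − wᵀv) ≥ 0; (3) λ† = 0 and v − w (QᵀQ)⁻¹ Qᵀ r > 0. (Necessary and sufficient condition for pointwise feasibility, Theorem 2 of the paper.) -/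
/-!
Positivity of `F` compares `|w y|` with `‖Q y‖` for all `y`. If `F` is not positive semidefinite,
some direction `y` has `‖Q y‖ < |w y|`, and moving far enough along it makes the constraint hold.

Otherwise let `u₀ = (QᵀQ)⁻¹ Qᵀ r`, so that `r - Q u₀` is orthogonal to the range of `Q` and
`‖Q (u + u₀)‖ ≤ ‖Q u + r‖`. Since `w (u + u₀) ≤ ‖Q (u + u₀)‖`, a feasible `u` forces
`c = v - w u₀` to be nonnegative, and positive if `r` is not in the range of `Q`.
* If `F` is singular, `‖Q y‖ = |w y|` for some `y ≠ 0`. Along `y` the squares of both sides of the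
  constraint grow with the same leading coefficient, and `c > 0` decides in favour of the right one.
* If `F` is positive definite, then `H` fails to be so exactly when `‖Q u + r‖ ≤ |w u + v|` for
  some `u`. The reflection through `-u₀` preserves `‖Q u + r‖`, so for `c ≥ 0` it turns a solution
  with `w u + v < 0` into a feasible point. By the Sherman-Morrison formula `c` is a positive
  multiple of `v - w F⁻¹ (Qᵀ r - wᵀ v)`.
-/

open Matrix

/-- The symmetric matrix
`H = [[rᵀr − v², rᵀQ − v w], [Qᵀr − wᵀv, QᵀQ − wᵀw]]`. -/
noncomputable def socMatH {m : ℕ} (Q : Matrix (Fin (m + 1)) (Fin m) ℝ)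
    (r : Fin (m + 1) → ℝ) (w : Fin m → ℝ) (v : ℝ) :
    Matrix (Fin 1 ⊕ Fin m) (Fin 1 ⊕ Fin m) ℝ :=
  Matrix.fromBlocks
    (Matrix.of fun _ _ => r ⬝ᵥ r - v ^ 2)
    (Matrix.of fun _ j => (Qᵀ *ᵥ r) j - v * w j)
    (Matrix.of fun i _ => (Qᵀ *ᵥ r) i - v * w i)
    (Qᵀ * Q - Matrix.vecMulVec w w)

section SecondOrderCone

variable {E G : Type*} [AddCommGroup E] [Module ℝ E]

/-- Feasibility of the second-order cone constraint `‖T u + r‖ ≤ φ u + v` in the unknown `u`,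
stated for linear maps so that the arguments on norms do not depend on coordinates. -/
def SOCFeasible [SeminormedAddCommGroup G] [NormedSpace ℝ G]
    (T : E →ₗ[ℝ] G) (φ : E →ₗ[ℝ] ℝ) (r : G) (v : ℝ) : Prop :=
  ∃ u, ‖T u + r‖ ≤ φ u + v

section Normed

variable [SeminormedAddCommGroup G] [NormedSpace ℝ G]
  {T : E →ₗ[ℝ] G} {φ : E →ₗ[ℝ] ℝ} {r : G} {v : ℝ}

theorem exists_map_eq_and_norm_map_eq (T : E →ₗ[ℝ] G) {y : E} (hφy : φ y ≠ 0) {s : ℝ}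
    (hs : 0 ≤ s) : ∃ x, φ x = s ∧ ‖T x‖ = s * (‖T y‖ / |φ y|) := by
  refine ⟨(s / φ y) • y, by simp [hφy], ?_⟩
  rw [map_smul, norm_smul, norm_div, Real.norm_of_nonneg hs, Real.norm_eq_abs, div_mul_eq_mul_div,
    mul_div_assoc]

theorem socFeasible_of_norm_lt_abs {y : E} (hy : ‖T y‖ < |φ y|) : SOCFeasible T φ r v := by
  have hφy : 0 < |φ y| := (norm_nonneg _).trans_lt hy
  have hslope : 0 < 1 - ‖T y‖ / |φ y| := sub_pos.2 ((div_lt_one hφy).2 hy)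
  set s := |‖r‖ - v| / (1 - ‖T y‖ / |φ y|)
  have hs : s * (1 - ‖T y‖ / |φ y|) = |‖r‖ - v| := div_mul_cancel₀ _ hslope.ne'
  obtain ⟨x, hφx, hTx⟩ := exists_map_eq_and_norm_map_eq T (abs_pos.1 hφy) (s := s) (by positivity)
  refine ⟨x, ?_⟩
  calc ‖T x + r‖ ≤ s * (‖T y‖ / |φ y|) + ‖r‖ := hTx ▸ norm_add_le _ _
    _ ≤ φ x + v := by rw [hφx]; linarith [le_abs_self (‖r‖ - v)]

end Normed

section LeastSquares

variable [NormedAddCommGroup G] [InnerProductSpace ℝ G]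
  {T : E →ₗ[ℝ] G} {φ : E →ₗ[ℝ] ℝ} {r : G} {v : ℝ} {u₀ : E}

theorem norm_map_add_sq (hr : r - T u₀ ∈ T.rangeᗮ) (u : E) :
    ‖T u + r‖ ^ 2 = ‖T (u + u₀)‖ ^ 2 + ‖r - T u₀‖ ^ 2 := by
  have horth := Submodule.inner_right_of_mem_orthogonal (T.mem_range_self (u + u₀)) hr
  have hsplit : T u + r = T (u + u₀) + (r - T u₀) := by rw [map_add]; abel
  rw [hsplit, sq, norm_add_sq_eq_norm_sq_add_norm_sq_real horth, sq, sq]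

theorem norm_map_add_le_norm (hr : r - T u₀ ∈ T.rangeᗮ) (u : E) :
    ‖T (u + u₀)‖ ≤ ‖T u + r‖ := by
  rw [← sq_le_sq₀ (norm_nonneg _) (norm_nonneg _), norm_map_add_sq hr]
  exact le_add_of_nonneg_right (sq_nonneg _)

theorem norm_map_add_lt_norm (hr : r - T u₀ ∈ T.rangeᗮ) (hr₀ : r ≠ T u₀) (u : E) :
    ‖T (u + u₀)‖ < ‖T u + r‖ := by
  rw [← sq_lt_sq₀ (norm_nonneg _) (norm_nonneg _), norm_map_add_sq hr]
  exact lt_add_of_pos_right _ (pow_pos (norm_pos_iff.2 (sub_ne_zero.2 hr₀)) 2)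

theorem norm_map_reflection_add (hr : r - T u₀ ∈ T.rangeᗮ) (u : E) :
    ‖T (-(u + u₀) - u₀) + r‖ = ‖T u + r‖ := by
  rw [← sq_eq_sq₀ (norm_nonneg _) (norm_nonneg _), norm_map_add_sq hr, norm_map_add_sq hr,
    sub_add_cancel, map_neg, norm_neg]

theorem socFeasible_iff_nonneg_and_exists (hφ : ∀ x, |φ x| ≤ ‖T x‖)
    (hr : r - T u₀ ∈ T.rangeᗮ) :
    SOCFeasible T φ r v ↔ 0 ≤ v - φ u₀ ∧ ∃ u, ‖T u + r‖ ≤ |φ u + v| := by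
  constructor
  · rintro ⟨u, hu⟩
    have hle : φ (u + u₀) ≤ φ u + v := calc
      φ (u + u₀) ≤ ‖T (u + u₀)‖ := (le_abs_self _).trans (hφ _)
      _ ≤ ‖T u + r‖ := norm_map_add_le_norm hr u
      _ ≤ φ u + v := hu
    exact ⟨by linarith [map_add φ u u₀], u, hu.trans (le_abs_self _)⟩
  · rintro ⟨hv, u, hu⟩
    rcases abs_cases (φ u + v) with ⟨habs, -⟩ | ⟨habs, -⟩
    · exact ⟨u, habs ▸ hu⟩
    · refine ⟨-(u + u₀) - u₀, ?_⟩
      rw [norm_map_reflection_add hr, map_sub, map_neg, map_add]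
      linarith

theorem socFeasible_iff_pos (hφ : ∀ x, |φ x| ≤ ‖T x‖) (hr : r - T u₀ ∈ T.rangeᗮ)
    (hr₀ : r ≠ T u₀) {y : E} (hy : ‖T y‖ = |φ y|) (hφy : φ y ≠ 0) :
    SOCFeasible T φ r v ↔ 0 < v - φ u₀ := by
  constructor
  · rintro ⟨u, hu⟩
    have hlt : φ (u + u₀) < φ u + v := calc
      φ (u + u₀) ≤ ‖T (u + u₀)‖ := (le_abs_self _).trans (hφ _)
      _ < ‖T u + r‖ := norm_map_add_lt_norm hr hr₀ u
      _ ≤ φ u + v := hu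
    linarith [map_add φ u u₀]
  · intro hv
    set c := v - φ u₀ with hc
    -- This `s` solves `s ^ 2 + ‖r - T u₀‖ ^ 2 = s ^ 2 + 2 * s * c`.
    set s := ‖r - T u₀‖ ^ 2 / (2 * c)
    have hs : s * (2 * c) = ‖r - T u₀‖ ^ 2 := div_mul_cancel₀ _ (by positivity)
    have hs₀ : 0 ≤ s := by positivity
    obtain ⟨x, hφx, hTx⟩ := exists_map_eq_and_norm_map_eq T hφy hs₀
    rw [hy, div_self (abs_ne_zero.2 hφy), mul_one] at hTx
    have hval : φ (x - u₀) + v = s + c := by rw [map_sub, hφx, hc]; ring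
    refine ⟨x - u₀, ?_⟩
    rw [hval, ← sq_le_sq₀ (norm_nonneg _) (by positivity), norm_map_add_sq hr, sub_add_cancel,
      hTx, ← hs]
    linarith [sq_nonneg c, add_sq s c]

end LeastSquares

end SecondOrderCone

section MinEigenvalue

open scoped ComplexOrder

variable {n 𝕜 : Type*} [Fintype n] [DecidableEq n] [Nonempty n] [RCLike 𝕜] {A : Matrix n n 𝕜}

theorem posSemidef_iff_iInf_eigenvalues_nonneg (hA : A.IsHermitian) :
    A.PosSemidef ↔ 0 ≤ ⨅ i, hA.eigenvalues i := by
  rw [hA.posSemidef_iff_eigenvalues_nonneg, le_ciInf_iff (Set.finite_range _).bddBelow,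
    Pi.le_def]
  rfl

theorem posDef_iff_iInf_eigenvalues_pos (hA : A.IsHermitian) :
    A.PosDef ↔ 0 < ⨅ i, hA.eigenvalues i := by
  obtain ⟨i₀, hi₀⟩ := exists_eq_ciInf_of_finite (f := hA.eigenvalues)
  rw [hA.posDef_iff_eigenvalues_pos]
  exact ⟨fun h => hi₀ ▸ h i₀, fun h i => h.trans_le (ciInf_le (Set.finite_range _).bddBelow i)⟩

end MinEigenvalue

section RankOneDowndate

variable {n : Type*}

theorem posDef_of_posDef_sub_vecMulVec [Finite n] {N : Matrix n n ℝ} {w : n → ℝ}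
    (hF : (N - vecMulVec w w).PosDef) : N.PosDef := by
  simpa using hF.add_posSemidef (posSemidef_vecMulVec_self_star w)

variable [Fintype n] [DecidableEq n]

theorem sub_dotProduct_inv_mulVec {R : Type*} [CommRing R] {N : Matrix n n R} {w : n → R}
    (hN : IsUnit N) (hF : IsUnit (N - vecMulVec w w)) (q : n → R) (v : R) :
    v - w ⬝ᵥ N⁻¹ *ᵥ q = (1 - w ⬝ᵥ N⁻¹ *ᵥ w) *
      (v - w ⬝ᵥ (N - vecMulVec w w)⁻¹ *ᵥ (q - v • w)) := by
  set z := (N - vecMulVec w w)⁻¹ *ᵥ (q - v • w)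
  have hFz : (N - vecMulVec w w) *ᵥ z = q - v • w := by
    rw [mulVec_mulVec, mul_nonsing_inv _ ((isUnit_iff_isUnit_det _).1 hF), one_mulVec]
  have hNz : N *ᵥ z = q - (v - w ⬝ᵥ z) • w := by
    rw [sub_mulVec, vecMulVec_mulVec, op_smul_eq_smul, sub_eq_iff_eq_add] at hFz
    rw [hFz]
    module
  have hz : z = N⁻¹ *ᵥ q - (v - w ⬝ᵥ z) • N⁻¹ *ᵥ w := by
    rw [← mulVec_smul, ← mulVec_sub, ← hNz, mulVec_mulVec,
      nonsing_inv_mul _ ((isUnit_iff_isUnit_det _).1 hN), one_mulVec]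
  have hwz := congrArg (w ⬝ᵥ ·) hz
  simp only [dotProduct_sub, dotProduct_smul, smul_eq_mul] at hwz
  linear_combination hwz

theorem dotProduct_inv_mulVec_lt_one {N : Matrix n n ℝ} {w : n → ℝ}
    (hF : (N - vecMulVec w w).PosDef) : w ⬝ᵥ N⁻¹ *ᵥ w < 1 := by
  have hN := (isUnit_iff_isUnit_det _).1 (posDef_of_posDef_sub_vecMulVec hF).isUnit
  set y := N⁻¹ *ᵥ w
  have hNy : N *ᵥ y = w := by rw [mulVec_mulVec, mul_nonsing_inv _ hN, one_mulVec]
  rcases eq_or_ne y 0 with hy | hy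
  · simp [hy]
  · have hpos := hF.dotProduct_mulVec_pos hy
    rw [star_trivial, sub_mulVec, hNy, vecMulVec_mulVec, op_smul_eq_smul, dotProduct_sub,
      dotProduct_smul, smul_eq_mul, dotProduct_comm y w] at hpos
    nlinarith

theorem sub_dotProduct_inv_mulVec_nonneg_iff {N : Matrix n n ℝ} {w : n → ℝ}
    (hF : (N - vecMulVec w w).PosDef) (q : n → ℝ) (v : ℝ) :
    0 ≤ v - w ⬝ᵥ N⁻¹ *ᵥ q ↔ 0 ≤ v - w ⬝ᵥ (N - vecMulVec w w)⁻¹ *ᵥ (q - v • w) := by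
  rw [sub_dotProduct_inv_mulVec (posDef_of_posDef_sub_vecMulVec hF).isUnit hF.isUnit]
  exact mul_nonneg_iff_of_pos_left (sub_pos.2 (dotProduct_inv_mulVec_lt_one hF))

end RankOneDowndate

section GramDowndate

variable {k n : Type*} [Fintype k]

theorem isHermitian_gram_sub_vecMulVec (A : Matrix k n ℝ) (b : n → ℝ) :
    (Aᵀ * A - vecMulVec b b).IsHermitian :=
  (isHermitian_conjTranspose_mul_self A).sub (IsHermitian.ext fun _ _ => mul_comm _ _)

variable [Fintype n]

theorem dotProduct_gram_sub_vecMulVec_mulVec_s5 (A : Matrix k n ℝ) (b x : n → ℝ) :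
    x ⬝ᵥ (Aᵀ * A - vecMulVec b b) *ᵥ x = ‖WithLp.toLp 2 (A *ᵥ x)‖ ^ 2 - (b ⬝ᵥ x) ^ 2 := by
  rw [sub_mulVec, dotProduct_sub, ← mulVec_mulVec, dotProduct_transpose_mulVec,
    vecMulVec_mulVec, op_smul_eq_smul, dotProduct_smul, smul_eq_mul, dotProduct_comm x b,
    ← real_inner_self_eq_norm_sq, EuclideanSpace.inner_toLp_toLp, star_trivial, ← sq]

theorem posDef_gram_sub_vecMulVec_iff (A : Matrix k n ℝ) (b : n → ℝ) :
    (Aᵀ * A - vecMulVec b b).PosDef ↔ ∀ x ≠ 0, |b ⬝ᵥ x| < ‖WithLp.toLp 2 (A *ᵥ x)‖ := by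
  rw [posDef_iff_dotProduct_mulVec, and_iff_right (isHermitian_gram_sub_vecMulVec A b)]
  refine forall₂_congr fun x _ => ?_
  rw [star_trivial, dotProduct_gram_sub_vecMulVec_mulVec_s5, sub_pos, sq_lt_sq, abs_norm]

theorem posSemidef_gram_sub_vecMulVec_iff (A : Matrix k n ℝ) (b : n → ℝ) :
    (Aᵀ * A - vecMulVec b b).PosSemidef ↔ ∀ x, |b ⬝ᵥ x| ≤ ‖WithLp.toLp 2 (A *ᵥ x)‖ := by
  rw [posSemidef_iff_dotProduct_mulVec, and_iff_right (isHermitian_gram_sub_vecMulVec A b)]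
  refine forall_congr' fun x => ?_
  rw [star_trivial, dotProduct_gram_sub_vecMulVec_mulVec_s5, sub_nonneg, sq_le_sq, abs_norm]

end GramDowndate

section Augmented

variable {k n R : Type*}

/-- The matrix `[r  Q]`, whose independent columns are the rank condition of the theorem. The column
`r` is indexed by `Fin 1`. -/
def augmented (Q : Matrix k n R) (r : k → R) : Matrix k (Fin 1 ⊕ n) R :=
  fromCols (replicateCol (Fin 1) r) Q

variable [Fintype n] [CommRing R] {Q : Matrix k n R} {r : k → R}

theorem augmented_mulVec_sumElim (Q : Matrix k n R) (r : k → R) (a : R) (y : n → R) :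
    augmented Q r *ᵥ Sum.elim (fun _ => a) y = Q *ᵥ y + a • r := by
  rw [augmented, fromCols_mulVec_sumElim, add_comm]
  congr 1
  ext i
  simp [mulVec, dotProduct, mul_comm]

theorem mulVec_injective_of_linearIndependent_augmented
    (hQr : LinearIndependent R (augmented Q r).col) : Function.Injective Q.mulVec :=
  mulVec_injective_iff.2 (hQr.comp Sum.inr Sum.inr_injective)

theorem ne_mulVec_of_linearIndependent_augmented [Nontrivial R]
    (hQr : LinearIndependent R (augmented Q r).col) (u : n → R) : r ≠ Q *ᵥ u := by
  intro hr
  have hker : (Sum.elim (fun _ => 1) (-u) : Fin 1 ⊕ n → R) = 0 :=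
    mulVec_injective_iff.2 hQr <| by
      rw [augmented_mulVec_sumElim, mulVec_neg, one_smul, hr, neg_add_cancel, mulVec_zero]
  exact one_ne_zero (congrFun hker (Sum.inl 0))

end Augmented

section SocMatrix

variable {k n : Type*} [Fintype k]

/-- The matrix `H`, with arbitrary index types, of the quadratic form
`(a, y) ↦ ‖Q y + a r‖² - (w y + a v)²`. Written as `[r  Q]ᵀ [r  Q] - [v  w]ᵀ [v  w]` it has the
same shape as `F = Qᵀ Q - wᵀ w`. -/
noncomputable def socMatrix (Q : Matrix k n ℝ) (r : k → ℝ) (w : n → ℝ) (v : ℝ) :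
    Matrix (Fin 1 ⊕ n) (Fin 1 ⊕ n) ℝ :=
  (augmented Q r)ᵀ * augmented Q r -
    vecMulVec (Sum.elim (fun _ => v) w) (Sum.elim (fun _ => v) w)

theorem posDef_socMatrix_iff [Fintype n] (Q : Matrix k n ℝ) (r : k → ℝ) (w : n → ℝ) (v : ℝ) :
    (socMatrix Q r w v).PosDef ↔
      (Qᵀ * Q - vecMulVec w w).PosDef ∧
        ∀ u, |w ⬝ᵥ u + v| < ‖WithLp.toLp 2 (Q *ᵥ u + r)‖ := by
  rw [socMatrix, posDef_gram_sub_vecMulVec_iff, posDef_gram_sub_vecMulVec_iff]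
  have hpair (a : ℝ) (y : n → ℝ) :
      Sum.elim (fun _ => v) w ⬝ᵥ Sum.elim (fun _ : Fin 1 => a) y = w ⬝ᵥ y + a * v := by
    simp [dotProduct, add_comm, mul_comm]
  constructor
  · intro h
    refine ⟨fun y hy => ?_, fun u => ?_⟩
    · simpa [augmented_mulVec_sumElim, hpair] using
        h (Sum.elim (fun _ => 0) y) fun h₀ => hy (congrArg (· ∘ Sum.inr) h₀)
    · simpa [augmented_mulVec_sumElim, hpair] using
        h (Sum.elim (fun _ => 1) u) fun h₀ => one_ne_zero (congrFun h₀ (Sum.inl 0))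
  · rintro ⟨hF, hu⟩ x hx
    obtain ⟨a, y, rfl⟩ : ∃ a y, x = Sum.elim (fun _ => a) y := by
      refine ⟨x (Sum.inl 0), x ∘ Sum.inr, funext ?_⟩
      rintro (i | i)
      · rw [Subsingleton.elim i 0, Sum.elim_inl]
      · rfl
    rw [augmented_mulVec_sumElim, hpair]
    rcases eq_or_ne a 0 with rfl | ha
    · have hy : y ≠ 0 := by rintro rfl; exact hx (by ext (i | i) <;> rfl)
      simpa using hF y hy
    · have hQ : Q *ᵥ y + a • r = a • (Q *ᵥ (a⁻¹ • y) + r) := by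
        rw [mulVec_smul, smul_add, smul_inv_smul₀ ha]
      have hw : w ⬝ᵥ y + a * v = a * (w ⬝ᵥ (a⁻¹ • y) + v) := by
        rw [dotProduct_smul, smul_eq_mul, mul_add, mul_inv_cancel_left₀ ha]
      rw [hQ, hw, abs_mul, WithLp.toLp_smul, norm_smul, Real.norm_eq_abs]
      exact mul_lt_mul_of_pos_left (hu _) (abs_pos.2 ha)

end SocMatrix

section Feasibility

variable {k n : Type*} [Fintype k] [Fintype n]

/-- The linear map `x ↦ Q x` into Euclidean space, through which the constraint on matrices becomes
an instance of `SOCFeasible`. Its domain is the plain function type, since no norm on it is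
needed. -/
noncomputable def euclideanMulVec (Q : Matrix k n ℝ) : (n → ℝ) →ₗ[ℝ] EuclideanSpace ℝ k :=
  (WithLp.linearEquiv 2 ℝ (k → ℝ)).symm.toLinearMap ∘ₗ Q.mulVecLin

theorem socFeasible_euclideanMulVec_iff (Q : Matrix k n ℝ) (r : k → ℝ) (w : n → ℝ) (v : ℝ) :
    SOCFeasible (euclideanMulVec Q) (dotProductBilin ℝ ℝ w) (WithLp.toLp 2 r) v ↔
      ∃ u, ‖WithLp.toLp 2 (Q *ᵥ u + r)‖ ≤ w ⬝ᵥ u + v :=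
  Iff.rfl

theorem socFeasible_of_not_posSemidef {Q : Matrix k n ℝ} {w : n → ℝ} (r : k → ℝ) (v : ℝ)
    (hF : ¬ (Qᵀ * Q - vecMulVec w w).PosSemidef) :
    SOCFeasible (euclideanMulVec Q) (dotProductBilin ℝ ℝ w) (WithLp.toLp 2 r) v := by
  rw [posSemidef_gram_sub_vecMulVec_iff] at hF
  push Not at hF
  obtain ⟨y, hy⟩ := hF
  exact socFeasible_of_norm_lt_abs hy

theorem not_posDef_socMatrix_of_socFeasible {Q : Matrix k n ℝ} {r : k → ℝ} {w : n → ℝ} {v : ℝ}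
    (h : SOCFeasible (euclideanMulVec Q) (dotProductBilin ℝ ℝ w) (WithLp.toLp 2 r) v) :
    ¬ (socMatrix Q r w v).PosDef := by
  obtain ⟨u, hu⟩ := h
  rw [posDef_socMatrix_iff]
  exact fun hH => ((le_abs_self _).trans_lt (hH.2 u)).not_ge hu

variable [DecidableEq n]

theorem toLp_sub_euclideanMulVec_mem_orthogonal {Q : Matrix k n ℝ} (hQ : IsUnit (Qᵀ * Q))
    (r : k → ℝ) :
    WithLp.toLp 2 r - euclideanMulVec Q ((Qᵀ * Q)⁻¹ *ᵥ (Qᵀ *ᵥ r)) ∈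
      (euclideanMulVec Q).rangeᗮ := by
  set u₀ := (Qᵀ * Q)⁻¹ *ᵥ (Qᵀ *ᵥ r)
  have hnormal : Qᵀ *ᵥ (r - Q *ᵥ u₀) = 0 := by
    rw [mulVec_sub, mulVec_mulVec, mulVec_mulVec,
      mul_nonsing_inv _ ((isUnit_iff_isUnit_det _).1 hQ), one_mulVec, sub_self]
  rw [Submodule.mem_orthogonal]
  rintro _ ⟨x, rfl⟩
  change (r - Q *ᵥ u₀) ⬝ᵥ Q *ᵥ x = 0
  rw [← dotProduct_transpose_mulVec, hnormal, dotProduct_zero]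

theorem socFeasible_iff_of_posDef {Q : Matrix k n ℝ} {w : n → ℝ} (r : k → ℝ) (v : ℝ)
    (hF : (Qᵀ * Q - vecMulVec w w).PosDef) :
    SOCFeasible (euclideanMulVec Q) (dotProductBilin ℝ ℝ w) (WithLp.toLp 2 r) v ↔
      ¬ (socMatrix Q r w v).PosDef ∧
        0 ≤ v - w ⬝ᵥ ((Qᵀ * Q - vecMulVec w w)⁻¹ *ᵥ (Qᵀ *ᵥ r - v • w)) := by
  rw [posDef_socMatrix_iff, ← sub_dotProduct_inv_mulVec_nonneg_iff hF, and_iff_right hF, and_comm]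
  push Not
  exact socFeasible_iff_nonneg_and_exists
    ((posSemidef_gram_sub_vecMulVec_iff Q w).1 hF.posSemidef)
    (toLp_sub_euclideanMulVec_mem_orthogonal (posDef_of_posDef_sub_vecMulVec hF).isUnit r)

theorem socFeasible_iff_of_posSemidef_of_not_posDef {Q : Matrix k n ℝ} {r : k → ℝ} {w : n → ℝ}
    (v : ℝ) (hQr : LinearIndependent ℝ (augmented Q r).col)
    (hF : (Qᵀ * Q - vecMulVec w w).PosSemidef) (hF' : ¬ (Qᵀ * Q - vecMulVec w w).PosDef) :
    SOCFeasible (euclideanMulVec Q) (dotProductBilin ℝ ℝ w) (WithLp.toLp 2 r) v ↔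
      0 < v - w ⬝ᵥ ((Qᵀ * Q)⁻¹ *ᵥ (Qᵀ *ᵥ r)) := by
  have hQ := mulVec_injective_of_linearIndependent_augmented hQr
  have hφ := (posSemidef_gram_sub_vecMulVec_iff Q w).1 hF
  rw [posDef_gram_sub_vecMulVec_iff] at hF'
  push Not at hF'
  obtain ⟨y, hy₀, hy⟩ := hF'
  have hQy : 0 < ‖WithLp.toLp 2 (Q *ᵥ y)‖ := by
    rw [norm_pos_iff, Ne, WithLp.toLp_eq_zero, ← mulVec_zero Q]
    exact hQ.ne hy₀
  exact socFeasible_iff_pos hφ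
    (toLp_sub_euclideanMulVec_mem_orthogonal (PosDef.conjTranspose_mul_self Q hQ).isUnit r)
    (fun h => ne_mulVec_of_linearIndependent_augmented hQr _ (WithLp.toLp_injective 2 h))
    (hy.antisymm (hφ y)) (abs_pos.1 (hQy.trans_le hy))

theorem nec_and_suf_condition_feasibility_general [Nonempty n] (Q : Matrix k n ℝ) (r : k → ℝ)
    (w : n → ℝ) (v : ℝ) (hQr : LinearIndependent ℝ (augmented Q r).col) :
    let hF := isHermitian_gram_sub_vecMulVec Q w
    (∃ u, ‖WithLp.toLp 2 (Q *ᵥ u + r)‖ ≤ w ⬝ᵥ u + v) ↔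
      ¬ (socMatrix Q r w v).PosDef ∧
        ((⨅ i, hF.eigenvalues i) < 0 ∨
          (0 < (⨅ i, hF.eigenvalues i) ∧
            0 ≤ v - w ⬝ᵥ ((Qᵀ * Q - vecMulVec w w)⁻¹ *ᵥ (Qᵀ *ᵥ r - v • w))) ∨
          ((⨅ i, hF.eigenvalues i) = 0 ∧ 0 < v - w ⬝ᵥ ((Qᵀ * Q)⁻¹ *ᵥ (Qᵀ *ᵥ r)))) := by
  intro hF
  rw [← socFeasible_euclideanMulVec_iff]
  have hpsd := posSemidef_iff_iInf_eigenvalues_nonneg hF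
  have hpd := posDef_iff_iInf_eigenvalues_pos hF
  rcases lt_trichotomy (⨅ i, hF.eigenvalues i) 0 with hneg | hzero | hpos
  · have hfeas := socFeasible_of_not_posSemidef r v (mt hpsd.1 hneg.not_ge)
    simp [hneg, hfeas, not_posDef_socMatrix_of_socFeasible hfeas]
  · have hfeas := socFeasible_iff_of_posSemidef_of_not_posDef v hQr (hpsd.2 hzero.ge)
      (mt hpd.1 hzero.not_gt)
    have hH : ¬ (socMatrix Q r w v).PosDef := fun h =>
      hzero.not_gt (hpd.1 ((posDef_socMatrix_iff Q r w v).1 h).1)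
    simp [hzero, hfeas, hH]
  · simp [hpos, hpos.ne', hpos.not_gt, socFeasible_iff_of_posDef r v (hpd.2 hpos)]

end Feasibility

section FiniteCoordinates

theorem socMatH_eq_socMatrix {m : ℕ} (Q : Matrix (Fin (m + 1)) (Fin m) ℝ)
    (r : Fin (m + 1) → ℝ) (w : Fin m → ℝ) (v : ℝ) : socMatH Q r w v = socMatrix Q r w v := by
  ext (i | i) (j | j) <;>
    simp [socMatH, socMatrix, augmented, mul_apply, vecMulVec_apply, mulVec, dotProduct, sq,
      mul_comm]

theorem linearIndependent_augmented_col {m : ℕ} {Q : Matrix (Fin (m + 1)) (Fin m) ℝ}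
    {r : Fin (m + 1) → ℝ}
    (hrQ : IsUnit (of fun i => Fin.cons (r i) (Q i) : Matrix (Fin (m + 1)) (Fin (m + 1)) ℝ)) :
    LinearIndependent ℝ (augmented Q r).col := by
  have hinj : Function.Injective (Sum.elim (fun _ => 0) Fin.succ : Fin 1 ⊕ Fin m → Fin (m + 1)) :=
    (Function.injective_of_subsingleton _).sumElim (Fin.succ_injective m)
      fun _ j => (Fin.succ_ne_zero j).symm
  have hcol : (augmented Q r).col = (of fun i => Fin.cons (r i) (Q i)).col ∘
      (Sum.elim (fun _ => 0) Fin.succ : Fin 1 ⊕ Fin m → Fin (m + 1)) := by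
    ext (j | j) i <;> simp [augmented]
  rw [hcol]
  exact (linearIndependent_cols_of_isUnit hrQ).comp _ hinj

end FiniteCoordinates

/-- Theorem 2 (necessary and sufficient condition for pointwise feasibility):
assuming `[r Q]` is invertible, the SOC constraint `‖Q u + r‖₂ ≤ w u + v` is
feasible iff `H` is not positive definite and one of the three cases holds,
where `λ†` is the smallest eigenvalue of `F = QᵀQ − wᵀw`:
(1) `λ† < 0`; (2) `λ† > 0` and `v − w F⁻¹ (Qᵀr − wᵀv) ≥ 0`;
(3) `λ† = 0` and `v − w (QᵀQ)⁻¹ Qᵀ r > 0`. -/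
theorem nec_and_suf_condition_feasibility {m : ℕ} (hm : 0 < m)
    (Q : Matrix (Fin (m + 1)) (Fin m) ℝ) (r : Fin (m + 1) → ℝ)
    (w : Fin m → ℝ) (v : ℝ)
    (hrQ : IsUnit
      (Matrix.of (fun i => Fin.cons (r i) (Q i)) :
        Matrix (Fin (m + 1)) (Fin (m + 1)) ℝ))
    (hF : (Qᵀ * Q - Matrix.vecMulVec w w).IsHermitian) :
    (∃ u : Fin m → ℝ, eucNorm (Q *ᵥ u + r) ≤ w ⬝ᵥ u + v) ↔
      (¬ (socMatH Q r w v).PosDef ∧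
        ((⨅ i, hF.eigenvalues i) < 0 ∨
         (0 < (⨅ i, hF.eigenvalues i) ∧
           v - w ⬝ᵥ ((Qᵀ * Q - Matrix.vecMulVec w w)⁻¹ *ᵥ (Qᵀ *ᵥ r - v • w))
             ≥ 0) ∨
         ((⨅ i, hF.eigenvalues i) = 0 ∧
           v - w ⬝ᵥ ((Qᵀ * Q)⁻¹ *ᵥ (Qᵀ *ᵥ r)) > 0))) := by
  have : Nonempty (Fin m) := Fin.pos_iff_nonempty.1 hm
  simpa only [eucNorm_eq_norm_toLp, socMatH_eq_socMatrix] using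
    nec_and_suf_condition_feasibility_general Q r w v (linearIndependent_augmented_col hrQ)
end

section
/- Suppose F = QᵀQ − wᵀw is positive definite, H is not positive definite, and w u₁ + v ≥ 0, where u₁ := −F⁻¹(Qᵀr − wᵀv). Then u₁ itself satisfies the second-order cone constraint: ‖Q u₁ + r‖₂ ≤ w u₁ + v. (Sufficiency direction of Case 2 of Theorem 2 of the paper, with explicit feasible point.) -/
open Matrix

/-!
The Schur complement of the positive definite block `F` in `H` is a scalar, and it is the value at
`u₁` of the quadratic function `u ↦ ‖Q u + r‖² − (w u + v)²`, because `u₁` is the critical point of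
that function. Hence `H` is positive definite exactly when this value is positive; if it is not,
then `‖Q u₁ + r‖² ≤ (w u₁ + v)²`, and `w u₁ + v ≥ 0` allows taking square roots.
-/

theorem posDef_of_const_iff {R ι : Type*} [Ring R] [PartialOrder R] [StarRing R]
    [StarOrderedRing R] [NoZeroDivisors R] [Nontrivial R] [Unique ι] (c : R) :
    (of fun _ _ : ι => c).PosDef ↔ 0 < c := by
  classical
  have eq_diagonal : (of fun _ _ : ι => c) = diagonal fun _ => c := by
    ext i j
    rw [Subsingleton.elim j i, of_apply, diagonal_apply_eq]
  rw [eq_diagonal, posDef_diagonal_iff, Unique.forall_iff]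

section SchurComplement

open scoped ComplexOrder

variable {𝕜 m n : Type*} [RCLike 𝕜] [Fintype n] [DecidableEq n] {D : Matrix n n 𝕜}

theorem posDef_fromBlocks₂₂_iff [Finite m] (A : Matrix m m 𝕜) (B : Matrix m n 𝕜)
    (hD : D.PosDef) : (fromBlocks A B Bᴴ D).PosDef ↔ (A - B * D⁻¹ * Bᴴ).PosDef := by
  classical
  have := Fintype.ofFinite m
  let := hD.isUnit.invertible
  have semidef_iff := PosDef.fromBlocks₂₂ A B hD
  have isUnit_iff : IsUnit (fromBlocks A B Bᴴ D) ↔ IsUnit (A - B * D⁻¹ * Bᴴ) := by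
    rw [isUnit_fromBlocks_iff_of_invertible₂₂, invOf_eq_nonsing_inv]
  exact ⟨fun h => (semidef_iff.mp h.posSemidef).posDef_iff_isUnit.mpr (isUnit_iff.mp h.isUnit),
    fun h => (semidef_iff.mpr h.posSemidef).posDef_iff_isUnit.mpr (isUnit_iff.mpr h.isUnit)⟩

theorem posDef_fromBlocks_replicateRow_replicateCol_iff [Unique m] (c : 𝕜) (g : n → 𝕜)
    (hD : D.PosDef) :
    (fromBlocks (of fun _ _ : m => c) (replicateRow m (star g)) (replicateCol m g) D).PosDef ↔
      0 < c - star g ⬝ᵥ D⁻¹ *ᵥ g := by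
  have col_eq : replicateCol m g = (replicateRow m (star g))ᴴ := by
    rw [conjTranspose_replicateRow, star_star]
  have schur : (of fun _ _ : m => c) - replicateRow m (star g) * D⁻¹ * replicateCol m g =
      of fun _ _ => c - star g ⬝ᵥ D⁻¹ *ᵥ g := by
    rw [Matrix.mul_assoc, ← replicateCol_mulVec, replicateRow_mul_replicateCol]
    rfl
  rw [col_eq, posDef_fromBlocks₂₂_iff _ _ hD, ← col_eq, schur, posDef_of_const_iff]

end SchurComplement

section ConeGap

variable {R ι κ : Type*} [CommRing R] [Fintype ι] [Fintype κ]
  (Q : Matrix ι κ R) (r : ι → R) (w : κ → R) (v : R) (u : κ → R)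

/-- The quadratic function `u ↦ ‖Q u + r‖² − (w u + v)²`, which is nonpositive wherever the
second-order cone constraint `‖Q u + r‖ ≤ w u + v` holds. The squared norm is written as a dot
product, so that the expansions below make sense over any commutative ring. -/
def coneGap : R :=
  (Q *ᵥ u + r) ⬝ᵥ (Q *ᵥ u + r) - (w ⬝ᵥ u + v) ^ 2

theorem coneGap_eq_quadratic :
    coneGap Q r w v u =
      u ⬝ᵥ (Qᵀ * Q - vecMulVec w w) *ᵥ u + 2 * ((Qᵀ *ᵥ r - v • w) ⬝ᵥ u) + (r ⬝ᵥ r - v ^ 2) := by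
  have quadratic_part : u ⬝ᵥ (Qᵀ * Q - vecMulVec w w) *ᵥ u =
      (Q *ᵥ u) ⬝ᵥ (Q *ᵥ u) - (w ⬝ᵥ u) ^ 2 := by
    rw [sub_mulVec, dotProduct_sub, ← mulVec_mulVec, dotProduct_mulVec, vecMul_transpose,
      vecMulVec_mulVec, op_smul_eq_smul, dotProduct_smul, dotProduct_comm u w, smul_eq_mul, sq]
  have linear_part : (Qᵀ *ᵥ r - v • w) ⬝ᵥ u = r ⬝ᵥ (Q *ᵥ u) - v * (w ⬝ᵥ u) := by
    rw [sub_dotProduct, smul_dotProduct, mulVec_transpose, ← dotProduct_mulVec, smul_eq_mul]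
  rw [quadratic_part, linear_part, coneGap, add_dotProduct, dotProduct_add, dotProduct_add,
    dotProduct_comm (Q *ᵥ u) r]
  ring

variable {Q r w v u}

theorem coneGap_eq_of_mulVec_eq_neg
    (hu : (Qᵀ * Q - vecMulVec w w) *ᵥ u = -(Qᵀ *ᵥ r - v • w)) :
    coneGap Q r w v u = r ⬝ᵥ r - v ^ 2 + (Qᵀ *ᵥ r - v • w) ⬝ᵥ u := by
  rw [coneGap_eq_quadratic, hu, dotProduct_neg, dotProduct_comm u]
  ring

end ConeGap

theorem eucNorm_le_iff_coneGap_nonpos {k n : ℕ} {Q : Matrix (Fin k) (Fin n) ℝ} {r : Fin k → ℝ}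
    {w : Fin n → ℝ} {v : ℝ} {u : Fin n → ℝ} (hu : 0 ≤ w ⬝ᵥ u + v) :
    eucNorm (Q *ᵥ u + r) ≤ w ⬝ᵥ u + v ↔ coneGap Q r w v u ≤ 0 := by
  rw [eucNorm, Real.sqrt_le_left hu, coneGap, sub_nonpos]

theorem socMatH_eq_fromBlocks_replicate {m : ℕ} (Q : Matrix (Fin (m + 1)) (Fin m) ℝ)
    (r : Fin (m + 1) → ℝ) (w : Fin m → ℝ) (v : ℝ) :
    socMatH Q r w v = fromBlocks (of fun _ _ => r ⬝ᵥ r - v ^ 2)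
      (replicateRow (Fin 1) (Qᵀ *ᵥ r - v • w)) (replicateCol (Fin 1) (Qᵀ *ᵥ r - v • w))
      (Qᵀ * Q - vecMulVec w w) :=
  rfl

theorem socMatH_posDef_iff {m : ℕ} {Q : Matrix (Fin (m + 1)) (Fin m) ℝ}
    (r : Fin (m + 1) → ℝ) {w : Fin m → ℝ} (v : ℝ) (hF : (Qᵀ * Q - vecMulVec w w).PosDef) :
    (socMatH Q r w v).PosDef ↔
      0 < coneGap Q r w v (-((Qᵀ * Q - vecMulVec w w)⁻¹ *ᵥ (Qᵀ *ᵥ r - v • w))) := by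
  have critical : (Qᵀ * Q - vecMulVec w w) *ᵥ
      (-((Qᵀ * Q - vecMulVec w w)⁻¹ *ᵥ (Qᵀ *ᵥ r - v • w))) = -(Qᵀ *ᵥ r - v • w) := by
    rw [mulVec_neg, mulVec_mulVec, mul_nonsing_inv _ hF.det_pos.ne'.isUnit, one_mulVec]
  have schur := posDef_fromBlocks_replicateRow_replicateCol_iff (m := Fin 1)
    (r ⬝ᵥ r - v ^ 2) (Qᵀ *ᵥ r - v • w) hF
  rw [star_trivial] at schur
  rw [socMatH_eq_fromBlocks_replicate, schur, coneGap_eq_of_mulVec_eq_neg critical,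
    dotProduct_neg, ← sub_eq_add_neg]

/-- Sufficiency direction of Case 2 of Theorem 2, with explicit feasible
point: if `F = QᵀQ − wᵀw` is positive definite, `H` is not positive definite,
and `w u₁ + v ≥ 0` where `u₁ = −F⁻¹(Qᵀr − wᵀv)`, then `u₁` satisfies the SOC
constraint `‖Q u₁ + r‖₂ ≤ w u₁ + v`. -/
theorem case2_sufficiency_explicit {m : ℕ} (hm : 0 < m)
    (Q : Matrix (Fin (m + 1)) (Fin m) ℝ) (r : Fin (m + 1) → ℝ)
    (w : Fin m → ℝ) (v : ℝ)
    (hF : (Qᵀ * Q - Matrix.vecMulVec w w).PosDef)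
    (hH : ¬ (socMatH Q r w v).PosDef)
    (u₁ : Fin m → ℝ)
    (hu₁ : u₁ = -((Qᵀ * Q - Matrix.vecMulVec w w)⁻¹ *ᵥ (Qᵀ *ᵥ r - v • w)))
    (hpos : w ⬝ᵥ u₁ + v ≥ 0) :
    eucNorm (Q *ᵥ u₁ + r) ≤ w ⬝ᵥ u₁ + v := by
  rw [eucNorm_le_iff_coneGap_nonpos hpos, hu₁]
  exact not_lt.mp (mt (socMatH_posDef_iff r v hF).mpr hH)
end

section
/- Suppose QᵀQ is positive definite, F = QᵀQ − wᵀw is positive semidefinite and singular (its smallest eigenvalue is 0), and p := v − w (QᵀQ)⁻¹ Qᵀ r > 0. Then there exists u ∈ ℝ^m satisfying the second-order cone constraint ‖Q u + r‖₂ ≤ w u + v; in fact, writing u₀ = −(QᵀQ)⁻¹Qᵀr and letting e be a unit vector with F e = 0, one has w e ≠ 0 and u = u₀ + α · sgn(w e) · e satisfies the constraint for all sufficiently large α > 0. (Sufficiency direction of Case 3 of Theorem 2 of the paper.) -/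
open Matrix

/-!
Let `y = Q u₀ + r` be the least-squares residual and `p = w u₀ + v > 0`. Since `y` is orthogonal to
the range of `Q`, moving from `u₀` by `t e` turns the squared norm into `‖y‖² + t² ‖Q e‖²`. The
condition `eᵀ F e ≤ 0` says `‖Q e‖ ≤ |w e|`, so the quadratic term of `(p + t (w e))²` absorbs
that of the norm, and its cross term `2 p t (w e)`, which grows linearly when `t` has the sign of
`w e`, eventually exceeds `‖y‖²`.
-/

section CommSemiring

variable {k n R : Type*} [Fintype k] [Fintype n] [CommSemiring R]

theorem dotProduct_mulVec_eq_zero_of_transpose_mulVec_eq_zero {Q : Matrix k n R} {y : k → R}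
    (hy : Qᵀ *ᵥ y = 0) (e : n → R) : y ⬝ᵥ Q *ᵥ e = 0 := by
  rw [dotProduct_mulVec, ← mulVec_transpose, hy, zero_dotProduct]

theorem add_smul_dotProduct_self_of_dotProduct_eq_zero {y d : n → R} (hyd : y ⬝ᵥ d = 0) (t : R) :
    (y + t • d) ⬝ᵥ (y + t • d) = y ⬝ᵥ y + t ^ 2 * (d ⬝ᵥ d) := by
  have hdy : d ⬝ᵥ y = 0 := by rw [dotProduct_comm, hyd]
  simp only [add_dotProduct, dotProduct_add, smul_dotProduct, dotProduct_smul, hyd, hdy,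
    smul_eq_mul]
  ring

end CommSemiring

section CommRing

variable {k n R : Type*} [Fintype k] [Fintype n] [CommRing R]

theorem dotProduct_transpose_mul_self_sub_vecMulVec_mulVec (Q : Matrix k n R) (w e : n → R) :
    e ⬝ᵥ (Qᵀ * Q - vecMulVec w w) *ᵥ e = (Q *ᵥ e) ⬝ᵥ (Q *ᵥ e) - (w ⬝ᵥ e) ^ 2 := by
  have hgram : e ⬝ᵥ (Qᵀ * Q) *ᵥ e = (Q *ᵥ e) ⬝ᵥ (Q *ᵥ e) := by
    rw [← mulVec_mulVec, dotProduct_transpose_mulVec]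
  have hrank_one : e ⬝ᵥ vecMulVec w w *ᵥ e = (w ⬝ᵥ e) ^ 2 := by
    rw [vecMulVec_mulVec, op_smul_eq_smul, dotProduct_smul, dotProduct_comm e w, smul_eq_mul, sq]
  rw [sub_mulVec, dotProduct_sub, hgram, hrank_one]

theorem transpose_mulVec_leastSquares_residual_eq_zero [DecidableEq n] {Q : Matrix k n R}
    (hQ : IsUnit (Qᵀ * Q)) (r : k → R) :
    Qᵀ *ᵥ (Q *ᵥ (-((Qᵀ * Q)⁻¹ *ᵥ (Qᵀ *ᵥ r))) + r) = 0 := by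
  rw [mulVec_add, mulVec_mulVec, mulVec_neg, mulVec_mulVec,
    mul_nonsing_inv _ ((isUnit_iff_isUnit_det _).mp hQ), one_mulVec, neg_add_cancel]

end CommRing

section Real

variable {k n : Type*} [Fintype k] [Fintype n]

theorem mulVec_ne_zero_of_posDef_transpose_mul_self {Q : Matrix k n ℝ}
    (hQ : (Qᵀ * Q).PosDef) {e : n → ℝ} (he : e ≠ 0) : Q *ᵥ e ≠ 0 := by
  intro hQe
  have hpos := hQ.dotProduct_mulVec_pos he
  rw [← mulVec_mulVec, hQe, mulVec_zero, dotProduct_zero] at hpos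
  exact hpos.false

theorem dotProduct_ne_zero_of_dotProduct_mulVec_nonpos {Q : Matrix k n ℝ} {w e : n → ℝ}
    (hQe : Q *ᵥ e ≠ 0) (he : e ⬝ᵥ (Qᵀ * Q - vecMulVec w w) *ᵥ e ≤ 0) : w ⬝ᵥ e ≠ 0 := by
  intro hwe
  have hpos : 0 < (Q *ᵥ e) ⬝ᵥ (Q *ᵥ e) := dotProduct_star_self_pos_iff.mpr hQe
  rw [dotProduct_transpose_mul_self_sub_vecMulVec_mulVec, hwe] at he
  linarith

end Real

section EucNorm

variable {k : ℕ} {n : Type*} [Fintype n]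

theorem eucNorm_add_smul_le {y d : Fin k → ℝ} {p c t : ℝ} (hyd : y ⬝ᵥ d = 0)
    (hd : d ⬝ᵥ d ≤ c ^ 2) (hp : 0 ≤ p) (htc : 0 ≤ t * c) (hy : y ⬝ᵥ y ≤ 2 * p * (t * c)) :
    eucNorm (y + t • d) ≤ p + t * c := by
  refine Real.sqrt_le_iff.mpr ⟨add_nonneg hp htc, ?_⟩
  calc (y + t • d) ⬝ᵥ (y + t • d) = y ⬝ᵥ y + t ^ 2 * (d ⬝ᵥ d) :=
        add_smul_dotProduct_self_of_dotProduct_eq_zero hyd t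
    _ ≤ 2 * p * (t * c) + t ^ 2 * c ^ 2 := by gcongr
    _ ≤ (p + t * c) ^ 2 := by linarith [sq_nonneg p]

theorem exists_pos_forall_ge_eucNorm_add_smul_sign_le {y d : Fin k → ℝ} {p c : ℝ}
    (hyd : y ⬝ᵥ d = 0) (hd : d ⬝ᵥ d ≤ c ^ 2) (hp : 0 < p) (hc : c ≠ 0) :
    ∃ α₀ : ℝ, 0 < α₀ ∧ ∀ α : ℝ, α₀ ≤ α →
      eucNorm (y + (α * Real.sign c) • d) ≤ p + α * Real.sign c * c := by
  have hsc : 0 < Real.sign c * c := Real.sign_mul_pos_of_ne_zero c hc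
  have hslope : 0 < 2 * p * (Real.sign c * c) := by positivity
  refine ⟨max 1 (y ⬝ᵥ y / (2 * p * (Real.sign c * c))), by positivity, fun α hα => ?_⟩
  have hα_pos : 0 < α := one_pos.trans_le ((le_max_left _ _).trans hα)
  have hy : y ⬝ᵥ y ≤ α * (2 * p * (Real.sign c * c)) :=
    (div_le_iff₀ hslope).mp ((le_max_right _ _).trans hα)
  refine eucNorm_add_smul_le hyd hd hp.le ?_ ?_
  · rw [mul_assoc]
    positivity
  · linarith

theorem exists_pos_forall_ge_eucNorm_mulVec_add_le {Q : Matrix (Fin k) n ℝ} {r : Fin k → ℝ}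
    {w u₀ e : n → ℝ} {v : ℝ} (hu₀ : Qᵀ *ᵥ (Q *ᵥ u₀ + r) = 0) (hp : 0 < w ⬝ᵥ u₀ + v)
    (hwe : w ⬝ᵥ e ≠ 0) (he : e ⬝ᵥ (Qᵀ * Q - vecMulVec w w) *ᵥ e ≤ 0) :
    ∃ α₀ : ℝ, 0 < α₀ ∧ ∀ α : ℝ, α₀ ≤ α →
      eucNorm (Q *ᵥ (u₀ + (α * Real.sign (w ⬝ᵥ e)) • e) + r) ≤
        w ⬝ᵥ (u₀ + (α * Real.sign (w ⬝ᵥ e)) • e) + v := by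
  have horth := dotProduct_mulVec_eq_zero_of_transpose_mulVec_eq_zero hu₀ e
  have hnorm : (Q *ᵥ e) ⬝ᵥ (Q *ᵥ e) ≤ (w ⬝ᵥ e) ^ 2 := by
    rwa [dotProduct_transpose_mul_self_sub_vecMulVec_mulVec, sub_nonpos] at he
  have hlhs (t : ℝ) : Q *ᵥ (u₀ + t • e) + r = Q *ᵥ u₀ + r + t • Q *ᵥ e := by
    rw [mulVec_add, mulVec_smul, add_right_comm]
  have hrhs (t : ℝ) : w ⬝ᵥ (u₀ + t • e) + v = w ⬝ᵥ u₀ + v + t * (w ⬝ᵥ e) := by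
    rw [dotProduct_add, dotProduct_smul, smul_eq_mul, add_right_comm]
  simpa only [hlhs, hrhs] using exists_pos_forall_ge_eucNorm_add_smul_sign_le horth hnorm hp hwe

theorem case3_sufficiency_general {Q : Matrix (Fin k) n ℝ} {r : Fin k → ℝ} {w u₀ : n → ℝ} {v : ℝ}
    (hu₀ : Qᵀ *ᵥ (Q *ᵥ u₀ + r) = 0) (hp : 0 < w ⬝ᵥ u₀ + v)
    (hdir : ∃ e : n → ℝ, Q *ᵥ e ≠ 0 ∧ e ⬝ᵥ (Qᵀ * Q - vecMulVec w w) *ᵥ e ≤ 0) :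
    (∃ u : n → ℝ, eucNorm (Q *ᵥ u + r) ≤ w ⬝ᵥ u + v) ∧
    ∀ e : n → ℝ, Q *ᵥ e ≠ 0 → e ⬝ᵥ (Qᵀ * Q - vecMulVec w w) *ᵥ e ≤ 0 →
      w ⬝ᵥ e ≠ 0 ∧
      ∃ α₀ : ℝ, 0 < α₀ ∧ ∀ α : ℝ, α₀ ≤ α →
        eucNorm (Q *ᵥ (u₀ + (α * Real.sign (w ⬝ᵥ e)) • e) + r) ≤
          w ⬝ᵥ (u₀ + (α * Real.sign (w ⬝ᵥ e)) • e) + v := by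
  have hray (e : n → ℝ) (hQe : Q *ᵥ e ≠ 0)
      (he : e ⬝ᵥ (Qᵀ * Q - vecMulVec w w) *ᵥ e ≤ 0) :=
    have hwe := dotProduct_ne_zero_of_dotProduct_mulVec_nonpos hQe he
    And.intro hwe (exists_pos_forall_ge_eucNorm_mulVec_add_le hu₀ hp hwe he)
  obtain ⟨e, hQe, he⟩ := hdir
  obtain ⟨-, α₀, -, hα₀⟩ := hray e hQe he
  exact ⟨⟨_, hα₀ α₀ le_rfl⟩, hray⟩

end EucNorm

/-- Sufficiency direction of Case 3 of Theorem 2: suppose `QᵀQ` is positive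
definite, `F = QᵀQ − wᵀw` is positive semidefinite and singular (so there is
a unit vector `e` with `F e = 0`), and `p = v − w (QᵀQ)⁻¹ Qᵀ r > 0`. Then the
SOC constraint `‖Q u + r‖₂ ≤ w u + v` is feasible; in fact, for any unit
vector `e` with `F e = 0` one has `w e ≠ 0` and, writing
`u₀ = −(QᵀQ)⁻¹ Qᵀ r`, the input `u = u₀ + α · sgn(w e) · e` satisfies the
constraint for all sufficiently large `α > 0`. -/
theorem case3_sufficiency {m : ℕ} (hm : 0 < m)
    (Q : Matrix (Fin (m + 1)) (Fin m) ℝ) (r : Fin (m + 1) → ℝ)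
    (w : Fin m → ℝ) (v : ℝ)
    (F : Matrix (Fin m) (Fin m) ℝ) (hFdef : F = Qᵀ * Q - Matrix.vecMulVec w w)
    (hQ : (Qᵀ * Q).PosDef)
    (hFpsd : F.PosSemidef)
    (hsing : ∃ e : Fin m → ℝ, e ⬝ᵥ e = 1 ∧ F *ᵥ e = 0)
    (u₀ : Fin m → ℝ) (hu₀ : u₀ = -((Qᵀ * Q)⁻¹ *ᵥ (Qᵀ *ᵥ r)))
    (hp : 0 < v - w ⬝ᵥ ((Qᵀ * Q)⁻¹ *ᵥ (Qᵀ *ᵥ r))) :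
    (∃ u : Fin m → ℝ, eucNorm (Q *ᵥ u + r) ≤ w ⬝ᵥ u + v) ∧
    ∀ e : Fin m → ℝ, e ⬝ᵥ e = 1 → F *ᵥ e = 0 →
      w ⬝ᵥ e ≠ 0 ∧
      ∃ α₀ : ℝ, 0 < α₀ ∧ ∀ α : ℝ, α₀ ≤ α →
        eucNorm (Q *ᵥ (u₀ + (α * Real.sign (w ⬝ᵥ e)) • e) + r) ≤
          w ⬝ᵥ (u₀ + (α * Real.sign (w ⬝ᵥ e)) • e) + v := by
  subst hFdef hu₀
  have hdir (e : Fin m → ℝ) (hunit : e ⬝ᵥ e = 1) (hFe : (Qᵀ * Q - vecMulVec w w) *ᵥ e = 0) :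
      Q *ᵥ e ≠ 0 ∧ e ⬝ᵥ (Qᵀ * Q - vecMulVec w w) *ᵥ e ≤ 0 :=
    ⟨mulVec_ne_zero_of_posDef_transpose_mul_self hQ (by rintro rfl; simp at hunit),
      by rw [hFe, dotProduct_zero]⟩
  obtain ⟨hfeas, hray⟩ := case3_sufficiency_general (v := v)
    (transpose_mulVec_leastSquares_residual_eq_zero hQ.isUnit r)
    (by rwa [dotProduct_neg, neg_add_eq_sub]) (hsing.imp fun e he => hdir e he.1 he.2)
  exact ⟨hfeas, fun e hunit hFe => (hdir e hunit hFe).elim (hray e)⟩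
end

section
/- Suppose the square matrix [r Q] ∈ ℝ^{(m+1)×(m+1)} is invertible, F = QᵀQ − wᵀw is positive semidefinite, and p := v − w (QᵀQ)⁻¹ Qᵀ r ≤ 0. Then the second-order cone constraint is infeasible: for every u ∈ ℝ^m, ‖Q u + r‖₂ > w u + v. (Necessity direction of Case 3 of Theorem 2 of the paper: the hyperplane lies below the positive sheet of the hyperboloid.) -/
open Matrix

/-!
Let `s` solve the normal equations `QᵀQ s = Qᵀ r`. The residual `r - Q s` is orthogonal to the
range of `Q`, so `‖Q u + r‖² = ‖Q (u + s)‖² + ‖r - Q s‖²`, and the last term is positive when `r` is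
not in that range. Positive semidefiniteness of `QᵀQ - wᵀw` bounds the first term below by
`(w (u + s))²`, and `v ≤ w s` turns this into a bound by `w u + v`.
-/

section

variable {ι κ : Type*} [Fintype ι] [Fintype κ]

theorem dotProduct_self_mulVec_add_of_normal_eq {R : Type*} [CommRing R] {Q : Matrix ι κ R}
    {r : ι → R} {s : κ → R} (hs : (Qᵀ * Q) *ᵥ s = Qᵀ *ᵥ r) (u : κ → R) :
    (Q *ᵥ u + r) ⬝ᵥ (Q *ᵥ u + r) =
      Q *ᵥ (u + s) ⬝ᵥ Q *ᵥ (u + s) + (r - Q *ᵥ s) ⬝ᵥ (r - Q *ᵥ s) := by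
  have residual_orthogonal : (r - Q *ᵥ s) ⬝ᵥ Q *ᵥ (u + s) = 0 := by
    rw [dotProduct_mulVec, ← mulVec_transpose, mulVec_sub, mulVec_mulVec, hs, sub_self,
      zero_dotProduct]
  have split : Q *ᵥ u + r = Q *ᵥ (u + s) + (r - Q *ᵥ s) := by
    rw [mulVec_add]
    abel
  rw [split, add_dotProduct, dotProduct_add, dotProduct_add, residual_orthogonal,
    dotProduct_comm (Q *ᵥ (u + s)) (r - Q *ᵥ s), residual_orthogonal, add_zero, zero_add]

theorem transpose_mul_self_mulVec_inv_mulVec [DecidableEq κ] {Q : Matrix ι κ ℝ}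
    (hQ : LinearIndependent ℝ Q.col) (b : κ → ℝ) : (Qᵀ * Q) *ᵥ ((Qᵀ * Q)⁻¹ *ᵥ b) = b := by
  have gram_posDef : (Qᵀ * Q).PosDef := by
    rw [← conjTranspose_eq_transpose_of_trivial]
    exact PosDef.conjTranspose_mul_self Q (mulVec_injective_iff.2 hQ)
  rw [mulVec_mulVec, mul_nonsing_inv _ ((isUnit_iff_isUnit_det _).1 gram_posDef.isUnit), one_mulVec]

theorem sq_dotProduct_le_of_posSemidef {Q : Matrix ι κ ℝ} {w : κ → ℝ}
    (hF : (Qᵀ * Q - vecMulVec w w).PosSemidef) (x : κ → ℝ) :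
    (w ⬝ᵥ x) ^ 2 ≤ Q *ᵥ x ⬝ᵥ Q *ᵥ x := by
  have quadratic_form_eq : x ⬝ᵥ (Qᵀ * Q - vecMulVec w w) *ᵥ x =
      Q *ᵥ x ⬝ᵥ Q *ᵥ x - (w ⬝ᵥ x) ^ 2 := by
    rw [sub_mulVec, dotProduct_sub, ← mulVec_mulVec, dotProduct_mulVec, vecMul_transpose,
      vecMulVec_mulVec, op_smul_eq_smul, dotProduct_smul, smul_eq_mul, dotProduct_comm x w, sq]
  have nonneg := hF.dotProduct_mulVec_nonneg x
  rwa [star_trivial, quadratic_form_eq, sub_nonneg] at nonneg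

end

theorem isUnit_of_cons_iff {K : Type*} [Field K] {m : ℕ} {Q : Matrix (Fin (m + 1)) (Fin m) K}
    {r : Fin (m + 1) → K} :
    IsUnit (of (fun i => Fin.cons (r i) (Q i)) : Matrix (Fin (m + 1)) (Fin (m + 1)) K) ↔
      LinearIndependent K Q.col ∧ r ∉ Submodule.span K (Set.range Q.col) := by
  have col_eq : (of (fun i => Fin.cons (r i) (Q i)) : Matrix _ (Fin (m + 1)) K).col =
      Fin.cons r Q.col := by
    ext j i
    cases j using Fin.cases <;> rfl
  rw [← linearIndependent_cols_iff_isUnit, col_eq, linearIndependent_finCons]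

theorem case3_necessity_general {n : ℕ} {κ : Type*} [Fintype κ] {Q : Matrix (Fin n) κ ℝ}
    {r : Fin n → ℝ} {w s : κ → ℝ} {v : ℝ} (hr : r ∉ Submodule.span ℝ (Set.range Q.col))
    (hF : (Qᵀ * Q - vecMulVec w w).PosSemidef) (hs : (Qᵀ * Q) *ᵥ s = Qᵀ *ᵥ r)
    (hv : v ≤ w ⬝ᵥ s) (u : κ → ℝ) :
    w ⬝ᵥ u + v < eucNorm (Q *ᵥ u + r) := by
  have residual_ne_zero : r - Q *ᵥ s ≠ 0 := fun h => hr <| by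
    rw [← range_mulVecLin, sub_eq_zero.1 h]
    exact ⟨s, rfl⟩
  have residual_pos : 0 < (r - Q *ᵥ s) ⬝ᵥ (r - Q *ᵥ s) := by
    simpa only [star_trivial] using dotProduct_star_self_pos_iff.2 residual_ne_zero
  calc
    w ⬝ᵥ u + v ≤ w ⬝ᵥ (u + s) := by
      rw [dotProduct_add]
      gcongr
    _ < eucNorm (Q *ᵥ u + r) := Real.lt_sqrt_of_sq_lt <| by
      rw [dotProduct_self_mulVec_add_of_normal_eq hs]
      exact lt_add_of_le_of_pos (sq_dotProduct_le_of_posSemidef hF _) residual_pos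

/-- Necessity direction of Case 3 of Theorem 2: if `[r Q]` is invertible,
`F = QᵀQ − wᵀw` is positive semidefinite, and `p = v − w (QᵀQ)⁻¹ Qᵀ r ≤ 0`,
then the SOC constraint is infeasible: `‖Q u + r‖₂ > w u + v` for all `u`. -/
theorem case3_necessity {m : ℕ} (hm : 0 < m)
    (Q : Matrix (Fin (m + 1)) (Fin m) ℝ) (r : Fin (m + 1) → ℝ)
    (w : Fin m → ℝ) (v : ℝ)
    (hrQ : IsUnit
      (Matrix.of (fun i => Fin.cons (r i) (Q i)) :
        Matrix (Fin (m + 1)) (Fin (m + 1)) ℝ))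
    (hFpsd : (Qᵀ * Q - Matrix.vecMulVec w w).PosSemidef)
    (hp : v - w ⬝ᵥ ((Qᵀ * Q)⁻¹ *ᵥ (Qᵀ *ᵥ r)) ≤ 0) :
    ∀ u : Fin m → ℝ, w ⬝ᵥ u + v < eucNorm (Q *ᵥ u + r) := by
  obtain ⟨hQ, hr⟩ := isUnit_of_cons_iff.1 hrQ
  exact case3_necessity_general hr hFpsd (transpose_mul_self_mulVec_inv_mulVec hQ _)
    (sub_nonpos.1 hp)
end

section
/- Let K₁, …, K_p ∈ ℝ^{N×N} be symmetric positive semidefinite matrices and Y ∈ ℝ^{p×N}. Then the matrix M ∈ ℝ^{N×N} with entries M_{jl} = Σ_{i=1}^{p} (K_i)_{jl} Y_{ij} Y_{il} is symmetric positive semidefinite. (This shows that the Gram matrix of the Affine Dot Product compound kernel k_c((x,y),(x',y')) = yᵀ Diag(k₁(x,x'),…,k_p(x,x')) y' is positive semidefinite whenever each k_i is a positive definite kernel, i.e., that k_c is a valid kernel.) -/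
open Matrix

/-! Each term of the sum is the congruence `D * K i * Dᴴ` of a positive semidefinite matrix by the
diagonal matrix `D` of the `i`-th row of `Y`. -/

section

variable {ι n R : Type*} [Ring R] [PartialOrder R] [StarRing R]

theorem posSemidef_of_mul_mul_star {A : Matrix n n R} (hA : A.PosSemidef) (d : n → R) :
    (of fun i j => d i * A i j * star (d j)).PosSemidef := by
  refine ⟨IsHermitian.ext fun i j => ?_, fun x => ?_⟩
  · simp only [of_apply, star_mul, star_star, hA.isHermitian.apply, mul_assoc]
  · -- `n` may be infinite, so the diagonal matrix is moved onto the finitely supported test vector.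
    have hsupp : (star d • x).support ⊆ x.support := fun i hi =>
      Finsupp.mem_support_iff.2 (right_ne_zero_of_mul (Finsupp.mem_support_iff.1 hi))
    calc
      0 ≤ (star d • x).sum fun i xi => (star d • x).sum fun j xj => star xi * A i j * xj :=
        hA.2 (star d • x)
      _ = x.sum fun i xi => x.sum fun j xj =>
          star (star (d i) * xi) * A i j * (star (d j) * xj) := by
        rw [Finsupp.sum_of_support_subset _ hsupp _ (by simp)]
        simp only [Finsupp.sum_of_support_subset _ hsupp _ (fun _ _ => mul_zero _)]
        rfl
      _ = x.sum fun i xi => x.sum fun j xj => star xi * (d i * A i j * star (d j)) * xj := by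
        simp only [star_mul, star_star, mul_assoc]

/-- With `n = X × (ι → R)`, `K i a b = k i a.1 b.1` and `Y i a = a.2 i`, this is the positive
semidefiniteness of the compound kernel itself rather than of its Gram matrices. -/
theorem adp_compound_kernel_psd_general [AddLeftMono R] [Fintype ι] {K : ι → Matrix n n R}
    (hK : ∀ i, (K i).PosSemidef) (Y : Matrix ι n R) :
    (of fun j l => ∑ i, Y i j * K i j l * star (Y i l)).PosSemidef := by
  convert posSemidef_sum Finset.univ fun i _ => posSemidef_of_mul_mul_star (hK i) (Y i) using 1
  ext j l
  simp only [of_apply, Matrix.sum_apply]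

end

/-- The Gram matrix of the Affine Dot Product compound kernel is positive
semidefinite: if `K₁, …, K_p` are symmetric positive semidefinite `N × N`
matrices and `Y ∈ ℝ^{p×N}`, then the matrix `M` with entries
`M_{jl} = Σ_i (K_i)_{jl} Y_{ij} Y_{il}` is (symmetric) positive
semidefinite. -/
theorem adp_compound_kernel_psd {N p : ℕ} (hN : 0 < N) (hp : 0 < p)
    (K : Fin p → Matrix (Fin N) (Fin N) ℝ)
    (hK : ∀ i, (K i).PosSemidef)
    (Y : Matrix (Fin p) (Fin N) ℝ) :
    (Matrix.of fun j l => ∑ i : Fin p, K i j l * Y i j * Y i l :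
      Matrix (Fin N) (Fin N) ℝ).PosSemidef := by
  simpa only [star_trivial, mul_comm (Y _ _) (K _ _ _)] using
    adp_compound_kernel_psd_general hK Y
end
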